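/- For every τ in the complex upper half plane, g_{1,0}(τ)·g_{1,1}(τ)·g_{1,2}(τ) = E₆(τ); moreover g_{1,j}(−j + i) = 0 for j ∈ {0,1,2}, and g_{1,0}(−1/τ) = τ²·g_{1,0}(τ) while g_{1,j}(−1/τ) = −τ²·g_{1,j}(τ) for j ∈ {1,2}. -/

import Mathlib

open Complex

/-- `q = exp(2πiτ)`. -/
noncomputable def qq (τ : ℂ) : ℂ := Complex.exp (2 * Real.pi * Complex.I * τ)

/-- `σ_k(n) = Σ_{d ∣ n} d^k`, as a complex number. -/
noncomputable def sigmaC (k n : ℕ) : ℂ := ∑ d ∈ n.divisors, (d : ℂ) ^ k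

/-- Eisenstein series `E₂(τ) = 1 - 24 Σ_{n≥1} σ₁(n) qⁿ`. -/
noncomputable def E₂ (τ : ℂ) : ℂ := 1 - 24 * ∑' n : ℕ, sigmaC 1 (n + 1) * qq τ ^ (n + 1)

/-- Eisenstein series `E₄(τ) = 1 + 240 Σ_{n≥1} σ₃(n) qⁿ`. -/
noncomputable def E₄ (τ : ℂ) : ℂ := 1 + 240 * ∑' n : ℕ, sigmaC 3 (n + 1) * qq τ ^ (n + 1)

/-- Eisenstein series `E₆(τ) = 1 - 504 Σ_{n≥1} σ₅(n) qⁿ`. -/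
noncomputable def E₆ (τ : ℂ) : ℂ := 1 - 504 * ∑' n : ℕ, sigmaC 5 (n + 1) * qq τ ^ (n + 1)

/-- Dedekind eta function `η(τ) = exp(πiτ/12) ∏_{n≥1} (1 - qⁿ)`. -/
noncomputable def η (τ : ℂ) : ℂ :=
  Complex.exp (Real.pi * Complex.I * τ / 12) * ∏' n : ℕ, (1 - qq τ ^ (n + 1))

/-- Theta function `θ(τ) = Σ_{n ∈ ℤ} q^{n²}`. -/
noncomputable def θ (τ : ℂ) : ℂ := ∑' n : ℤ, qq τ ^ (n ^ 2)

/-- The character `χ₋₄`: `χ₋₄(d) = 1, -1, 0` according as `d ≡ 1, 3, 0/2 (mod 4)`. -/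
noncomputable def χ₄ (d : ℕ) : ℂ := if d % 4 = 1 then 1 else if d % 4 = 3 then -1 else 0

/-- The character `χ₋₃`: `χ₋₃(d) = 1, -1, 0` according as `d ≡ 1, 2, 0 (mod 3)`. -/
noncomputable def χ₃ (d : ℕ) : ℂ := if d % 3 = 1 then 1 else if d % 3 = 2 then -1 else 0

/-- `E_{1,-4}(τ) = 1/4 + Σ_{n≥1} (Σ_{d∣n} χ₋₄(d)) qⁿ`. -/
noncomputable def E₁₄ (τ : ℂ) : ℂ :=
  1 / 4 + ∑' n : ℕ, (∑ d ∈ (n + 1).divisors, χ₄ d) * qq τ ^ (n + 1)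

/-- `E_{1,-3}(τ) = 1/6 + Σ_{n≥1} (Σ_{d∣n} χ₋₃(d)) qⁿ`. -/
noncomputable def E₁₃ (τ : ℂ) : ℂ :=
  1 / 6 + ∑' n : ℕ, (∑ d ∈ (n + 1).divisors, χ₃ d) * qq τ ^ (n + 1)

/-- `E_{2,2}(τ) = 2E₂(2τ) - E₂(τ)`. -/
noncomputable def E₂₂ (τ : ℂ) : ℂ := 2 * E₂ (2 * τ) - E₂ τ

/-- `E_{2,4}(τ) = (4E₄(2τ) - E₄(τ))/3`. -/
noncomputable def E₂₄ (τ : ℂ) : ℂ := (4 * E₄ (2 * τ) - E₄ τ) / 3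

/-- `E_{3,2}(τ) = (3E₂(3τ) - E₂(τ))/2`. -/
noncomputable def E₃₂ (τ : ℂ) : ℂ := (3 * E₂ (3 * τ) - E₂ τ) / 2

/-- `E_{3,4}(τ) = (9E₄(3τ) - E₄(τ))/8`. -/
noncomputable def E₃₄ (τ : ℂ) : ℂ := (9 * E₄ (3 * τ) - E₄ τ) / 8

/-- `E_{4,2}(τ) = (4E₂(4τ) - E₂(τ))/3`. -/
noncomputable def E₄₂ (τ : ℂ) : ℂ := (4 * E₂ (4 * τ) - E₂ τ) / 3

/-- `E'_{4,2}(τ) = 4E₂(4τ) - 4E₂(2τ) + E₂(τ)`. -/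
noncomputable def E₄₂' (τ : ℂ) : ℂ := 4 * E₂ (4 * τ) - 4 * E₂ (2 * τ) + E₂ τ

/-- `f_{1,j}(τ) = 2E₂(τ) - ((3+(-1)ʲi√3)/6)E₂(τ/2) - ((3-(-1)ʲi√3)/6)E₂((τ+1)/2)`. -/
noncomputable def f₁ (j : ℕ) (τ : ℂ) : ℂ :=
  2 * E₂ τ - ((3 + (-1 : ℂ) ^ j * Complex.I * Real.sqrt 3) / 6) * E₂ (τ / 2)
    - ((3 - (-1 : ℂ) ^ j * Complex.I * Real.sqrt 3) / 6) * E₂ ((τ + 1) / 2)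

/-- `g_{1,j}(τ) = (3/2)E₂(τ) - (1/4) Σ_{0≤m≤2, m≢j (mod 3)} E₂((τ+m)/3)`. -/
noncomputable def g₁ (j : ℕ) (τ : ℂ) : ℂ :=
  (3 / 2) * E₂ τ -
    (1 / 4) * ∑ m ∈ (Finset.range 3).filter (fun m => ¬ m % 3 = j % 3), E₂ ((τ + m) / 3)

/-- `f_{2,j}(τ) = 4E_{1,-4}(τ) + (-1)ʲ·2i·(E_{1,-4}(τ/2) - E_{1,-4}((τ+1)/2))`. -/
noncomputable def f₂ (j : ℕ) (τ : ℂ) : ℂ :=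
  4 * E₁₄ τ + (-1 : ℂ) ^ j * 2 * Complex.I * (E₁₄ (τ / 2) - E₁₄ ((τ + 1) / 2))

/-- `f_{3,j}(τ) = 6E_{1,-3}(2τ) + (-1)ʲ·i√3·(E_{1,-3}(τ/2) - E_{1,-3}((τ+1)/2))`. -/
noncomputable def f₃ (j : ℕ) (τ : ℂ) : ℂ :=
  6 * E₁₃ (2 * τ) +
    (-1 : ℂ) ^ j * Complex.I * Real.sqrt 3 * (E₁₃ (τ / 2) - E₁₃ ((τ + 1) / 2))

/-- `f_{4,j}(τ) = θ(τ/2 - (-1)ʲ/4)`. -/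
noncomputable def f₄ (j : ℕ) (τ : ℂ) : ℂ := θ (τ / 2 - (-1 : ℂ) ^ j / 4)

/-- `g_{4,j}(τ) = 2θ(2τ)² - θ((τ+j)/2)²`. -/
noncomputable def g₄ (j : ℕ) (τ : ℂ) : ℂ := 2 * θ (2 * τ) ^ 2 - θ ((τ + j) / 2) ^ 2

/-- `E_{3,-3,1}(τ) = -1/9 + Σ_{n≥1} (Σ_{d∣n} d²χ₋₃(d)) qⁿ`. -/
noncomputable def E₃₃₁ (τ : ℂ) : ℂ :=
  -(1 / 9) + ∑' n : ℕ, (∑ d ∈ (n + 1).divisors, (d : ℂ) ^ 2 * χ₃ d) * qq τ ^ (n + 1)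

/-- `E_{3,1,-3}(τ) = Σ_{n≥1} (Σ_{d∣n} d²χ₋₃(n/d)) qⁿ`. -/
noncomputable def E₃₁₃ (τ : ℂ) : ℂ :=
  ∑' n : ℕ, (∑ d ∈ (n + 1).divisors, (d : ℂ) ^ 2 * χ₃ ((n + 1) / d)) * qq τ ^ (n + 1)

open scoped UpperHalfPlane ModularForm MatrixGroups Manifold ArithmeticFunction.sigma

lemma sigmaC_eq_sigma (k n : ℕ) : sigmaC k n = (σ k n : ℂ) := by
  simp [sigmaC, ArithmeticFunction.sigma_apply]

lemma sigmaC_zero (k : ℕ) : sigmaC k 0 = 0 := by simp [sigmaC]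

lemma norm_sigmaC_le (k n : ℕ) : ‖sigmaC k n‖ ≤ (n : ℝ) ^ (k + 1) := by
  rw [sigmaC_eq_sigma, Complex.norm_natCast]
  exact_mod_cast ArithmeticFunction.sigma_le_pow_succ k n

lemma norm_qq (τ : ℂ) : ‖qq τ‖ = Real.exp (-(2 * Real.pi * τ.im)) := by
  simp [qq, Complex.norm_exp]

lemma norm_qq_lt_one {τ : ℂ} (hτ : 0 < τ.im) : ‖qq τ‖ < 1 := by
  rw [norm_qq, Real.exp_lt_one_iff]
  have := Real.pi_pos
  simp only [Left.neg_neg_iff]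
  positivity

lemma summable_sigmaC_mul_pow (k : ℕ) {x : ℂ} (hx : ‖x‖ < 1) :
    Summable fun n : ℕ => sigmaC k n * x ^ n := by
  refine Summable.of_norm_bounded
    (summable_norm_pow_mul_geometric_of_norm_lt_one (k + 1) hx) fun n => ?_
  simp only [norm_mul, norm_pow, Complex.norm_natCast]
  gcongr
  exact norm_sigmaC_le k n

lemma tsum_sigmaC_succ (k : ℕ) {x : ℂ} (hx : ‖x‖ < 1) :
    ∑' n : ℕ, sigmaC k (n + 1) * x ^ (n + 1) = ∑' n : ℕ, sigmaC k n * x ^ n := by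
  rw [(summable_sigmaC_mul_pow k hx).tsum_eq_zero_add]
  simp [sigmaC_zero]

lemma tsum_pnat_sigma (k : ℕ) (x : ℂ) :
    ∑' n : ℕ+, (σ k n : ℂ) * x ^ (n : ℕ) = ∑' n : ℕ, sigmaC k (n + 1) * x ^ (n + 1) := by
  rw [tsum_pnat_eq_tsum_succ (f := fun n => (σ k n : ℂ) * x ^ n)]
  simp_rw [sigmaC_eq_sigma]

lemma E₂_coe (z : ℍ) : E₂ z = EisensteinSeries.E2 z := by
  rw [EisensteinSeries.E2_eq_tsum_cexp, tsum_pnat_sigma, E₂, qq]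

lemma E₆_coe (z : ℍ) : E₆ z = ModularForm.E₆ z := by
  have h := EisensteinSeries.q_expansion_bernoulli (k := 6) (by norm_num) ⟨3, rfl⟩ z
  simp_rw [zpow_natCast] at h
  rw [show bernoulli 6 = 1 / 42 by decide +kernel, tsum_pnat_sigma] at h
  rw [h, E₆, qq]
  norm_num

lemma E₂_moebius {a b c d : ℤ} (hdet : a * d - b * c = 1) {τ : ℂ} (hτ : 0 < τ.im) :
    E₂ ((a * τ + b) / (c * τ + d)) =
      (c * τ + d) ^ 2 * E₂ τ + 6 * c * (c * τ + d) / (Real.pi * I) := by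
  let γ : SL(2, ℤ) := ⟨!![a, b; c, d], by simpa [Matrix.det_fin_two] using hdet⟩
  let z : ℍ := ⟨τ, hτ⟩
  have h := congrFun (EisensteinSeries.E2_slash_action γ) z
  have hden : UpperHalfPlane.denom γ z = c * τ + d := by
    rw [ModularGroup.denom_apply]
    simp [γ, z]
  have hne : (c * τ + d : ℂ) ≠ 0 := hden ▸ UpperHalfPlane.denom_ne_zero γ z
  have hsm : ((γ • z : ℍ) : ℂ) = (a * τ + b) / (c * τ + d) := by
    rw [UpperHalfPlane.coe_specialLinearGroup_apply]
    simp [γ, z]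
  rw [ModularForm.SL_slash_apply, ← E₂_coe, hden, hsm] at h
  simp only [Pi.sub_apply, Pi.smul_apply, ← E₂_coe, EisensteinSeries.D2, hden,
    riemannZeta_two] at h
  have h10 : (γ 1 0 : ℤ) = c := by simp [γ]
  have hpi : (Real.pi : ℂ) ≠ 0 := by simp [Real.pi_ne_zero]
  rw [h10, zpow_neg, ← div_eq_mul_inv, div_eq_iff (zpow_ne_zero _ hne)] at h
  rw [h]
  simp only [z, smul_eq_mul]
  field_simp
  ring_nf
  simp only [I_sq]
  ring

lemma E₂_add_one (τ : ℂ) : E₂ (τ + 1) = E₂ τ := by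
  have : qq (τ + 1) = qq τ := by
    simp only [qq, mul_add, mul_one, Complex.exp_add, Complex.exp_two_pi_mul_I]
  simp only [E₂, this]

lemma E₂_eq_tsum {τ : ℂ} (hτ : 0 < τ.im) :
    E₂ τ = 1 - 24 * ∑' n : ℕ, sigmaC 1 n * qq τ ^ n := by
  rw [E₂, tsum_sigmaC_succ 1 (norm_qq_lt_one hτ)]

/-- The part of the divisor sum of `3m` over divisors that are multiples of `3`. -/
lemma sum_divisors_three_mul_filter_dvd (m : ℕ) :
    ∑ d ∈ (3 * m).divisors with 3 ∣ d, d = 3 * ∑ d ∈ m.divisors, d := by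
  rcases eq_or_ne m 0 with rfl | hm
  · simp
  have : {d ∈ (3 * m).divisors | 3 ∣ d} = m.divisors.image (3 * ·) := by
    ext d
    simp only [Finset.mem_filter, Nat.mem_divisors, Finset.mem_image]
    constructor
    · rintro ⟨⟨h, -⟩, e, rfl⟩
      exact ⟨e, ⟨Nat.dvd_of_mul_dvd_mul_left (by norm_num) h, hm⟩, rfl⟩
    · rintro ⟨e, ⟨h, -⟩, rfl⟩
      exact ⟨⟨Nat.mul_dvd_mul_left 3 h, by positivity⟩, dvd_mul_right _ _⟩
  rw [this, Finset.sum_image (fun a _ b _ h => by simpa using h), Finset.mul_sum]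

lemma filter_not_dvd_divisors_three_mul (m : ℕ) :
    {d ∈ (3 * m).divisors | ¬ 3 ∣ d} = {d ∈ m.divisors | ¬ 3 ∣ d} := by
  rcases eq_or_ne m 0 with rfl | hm
  · simp
  ext d
  simp only [Finset.mem_filter, Nat.mem_divisors, and_congr_left_iff]
  intro h
  have hcop : Nat.Coprime d 3 := ((Nat.Prime.coprime_iff_not_dvd Nat.prime_three).2 h).symm
  rw [hcop.dvd_mul_left]
  simp [hm]

/-- The Hecke relation at `3` for the divisor sum `σ₁`. -/
lemma sum_divisors_three_mul (n : ℕ) :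
    ∑ d ∈ (3 * n).divisors, d + 3 * (if 3 ∣ n then ∑ d ∈ (n / 3).divisors, d else 0) =
      4 * ∑ d ∈ n.divisors, d := by
  have h := Finset.sum_filter_add_sum_filter_not (3 * n).divisors (3 ∣ ·) fun d => d
  have h' := Finset.sum_filter_add_sum_filter_not n.divisors (3 ∣ ·) fun d => d
  rw [sum_divisors_three_mul_filter_dvd, filter_not_dvd_divisors_three_mul] at h
  split_ifs with hn
  · obtain ⟨m, rfl⟩ := hn
    rw [sum_divisors_three_mul_filter_dvd] at h'
    rw [Nat.mul_div_cancel_left _ (by norm_num)]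
    omega
  · have h0 : ∑ d ∈ n.divisors with 3 ∣ d, d = 0 :=
      Finset.sum_eq_zero fun d hd => by
        simp only [Finset.mem_filter] at hd
        exact absurd (hd.2.trans (Nat.dvd_of_mem_divisors hd.1)) hn
    omega

lemma sigmaC_one_three_mul (n : ℕ) :
    sigmaC 1 (3 * n) + 3 * (if 3 ∣ n then sigmaC 1 (n / 3) else 0) = 4 * sigmaC 1 n := by
  have h := congrArg (Nat.cast : ℕ → ℂ) (sum_divisors_three_mul n)
  simp only [sigmaC, pow_one]
  push_cast at h
  simpa using h

lemma qq_add (a b : ℂ) : qq (a + b) = qq a * qq b := by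
  simp [qq, mul_add, Complex.exp_add]

lemma qq_nat_mul (n : ℕ) (a : ℂ) : qq (n * a) = qq a ^ n := by
  rw [qq, qq, ← Complex.exp_nat_mul]
  ring_nf

/-- A sum over multiples of `3`, indexed by all natural numbers. -/
lemma tsum_ite_three_dvd (f : ℕ → ℂ) :
    ∑' n : ℕ, (if 3 ∣ n then f n else 0) = ∑' n : ℕ, f (3 * n) := by
  rw [← (mul_right_injective₀ (three_ne_zero (α := ℕ))).tsum_eq]
  · simp
  · intro n hn
    by_contra h
    exact hn (if_neg fun ⟨m, hm⟩ => h ⟨m, hm.symm⟩)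

lemma qq_one_third_pow_sum (n : ℕ) :
    1 + qq (1 / 3) ^ n + (qq (1 / 3) ^ 2) ^ n = if 3 ∣ n then 3 else 0 := by
  have hprim : IsPrimitiveRoot (qq (1 / 3)) 3 := by
    have := Complex.isPrimitiveRoot_exp 3 (by norm_num)
    rw [qq]
    convert this using 2
    push_cast
    ring
  split_ifs with h
  · have h1 : qq (1 / 3) ^ n = 1 := (hprim.pow_eq_one_iff_dvd n).2 h
    rw [pow_right_comm, h1]
    norm_num
  · have h1 : qq (1 / 3) ^ n ≠ 1 := fun h1 => h ((hprim.pow_eq_one_iff_dvd n).1 h1)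
    have h3 : (qq (1 / 3) ^ n) ^ 3 = 1 := by rw [pow_right_comm, hprim.pow_eq_one, one_pow]
    rw [pow_right_comm]
    refine mul_left_cancel₀ (sub_ne_zero.2 h1) ?_
    linear_combination h3

/-- `E₂` is an eigenform of the Hecke operator at `3`. -/
lemma E₂_hecke_three {τ : ℂ} (hτ : 0 < τ.im) :
    9 * E₂ (3 * τ) + (E₂ (τ / 3) + E₂ ((τ + 1) / 3) + E₂ ((τ + 2) / 3)) = 12 * E₂ τ := by
  have him : ∀ m : ℝ, 0 < ((τ + m) / 3).im := fun m => by
    have : ((τ + m) / 3).im = τ.im / 3 := by simp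
    rw [this]; positivity
  have h0 : 0 < (τ / 3).im := by simpa using him 0
  have h1 : 0 < ((τ + 1) / 3).im := by simpa using him 1
  have h2 : 0 < ((τ + 2) / 3).im := by simpa using him 2
  have h3 : 0 < (3 * τ).im := by simpa using hτ
  have e1 : qq ((τ + 1) / 3) = qq (τ / 3) * qq (1 / 3) := by rw [← qq_add]; ring_nf
  have e2 : qq ((τ + 2) / 3) = qq (τ / 3) * qq (1 / 3) ^ 2 := by
    rw [← qq_nat_mul, ← qq_add]; push_cast; ring_nf
  have e3 : qq (3 * τ) = qq τ ^ 3 := by exact_mod_cast qq_nat_mul 3 τ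
  have e4 : qq τ = qq (τ / 3) ^ 3 := by rw [← qq_nat_mul]; push_cast; ring_nf
  have s0 := summable_sigmaC_mul_pow 1 (norm_qq_lt_one h0)
  have s1 := summable_sigmaC_mul_pow 1 (norm_qq_lt_one h1)
  have s2 := summable_sigmaC_mul_pow 1 (norm_qq_lt_one h2)
  have s := summable_sigmaC_mul_pow 1 (norm_qq_lt_one hτ)
  have s3 := summable_sigmaC_mul_pow 1 (norm_qq_lt_one h3)
  have thirds : ∑' n : ℕ, sigmaC 1 n * qq (τ / 3) ^ n + ∑' n : ℕ, sigmaC 1 n * qq ((τ + 1) / 3) ^ n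
      + ∑' n : ℕ, sigmaC 1 n * qq ((τ + 2) / 3) ^ n
        = 3 * ∑' n : ℕ, sigmaC 1 (3 * n) * qq τ ^ n := by
    rw [← s0.tsum_add s1, ← (s0.add s1).tsum_add s2, ← tsum_mul_left]
    trans ∑' n : ℕ, if 3 ∣ n then 3 * (sigmaC 1 n * qq (τ / 3) ^ n) else 0
    · refine tsum_congr fun n => ?_
      have := qq_one_third_pow_sum n
      rw [e1, e2, mul_pow, mul_pow]
      split_ifs at this ⊢ <;> linear_combination (sigmaC 1 n * qq (τ / 3) ^ n) * this
    · rw [tsum_ite_three_dvd]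
      simp_rw [e4, pow_mul]
  have hsplit : HasSum (fun n : ℕ => (if 3 ∣ n then sigmaC 1 (n / 3) * qq τ ^ n else 0))
      (∑' n : ℕ, sigmaC 1 n * qq (3 * τ) ^ n) := by
    rw [← (mul_right_injective₀ (three_ne_zero (α := ℕ))).hasSum_iff]
    · convert s3.hasSum using 2 with n
      simp [e3, pow_mul]
    · intro n hn
      exact if_neg fun ⟨m, hm⟩ => hn ⟨m, hm.symm⟩
  have key : ∑' n : ℕ, sigmaC 1 (3 * n) * qq τ ^ n =
      4 * ∑' n : ℕ, sigmaC 1 n * qq τ ^ n - 3 * ∑' n : ℕ, sigmaC 1 n * qq (3 * τ) ^ n := by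
    refine (((s.hasSum.mul_left 4).sub (hsplit.mul_left 3)).congr_fun fun n => ?_).tsum_eq
    have := sigmaC_one_three_mul n
    split_ifs at this ⊢ <;> linear_combination qq τ ^ n * this
  rw [E₂_eq_tsum hτ, E₂_eq_tsum h0, E₂_eq_tsum h1, E₂_eq_tsum h2, E₂_eq_tsum h3]
  linear_combination (-24) * thirds - 72 * key

lemma g₁_zero (τ : ℂ) :
    g₁ 0 τ = 3 / 2 * E₂ τ - 1 / 4 * (E₂ ((τ + 1) / 3) + E₂ ((τ + 2) / 3)) := by
  simp [g₁, Finset.sum_filter, Finset.sum_range_succ]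

lemma g₁_one (τ : ℂ) :
    g₁ 1 τ = 3 / 2 * E₂ τ - 1 / 4 * (E₂ (τ / 3) + E₂ ((τ + 2) / 3)) := by
  simp [g₁, Finset.sum_filter, Finset.sum_range_succ]

lemma g₁_two (τ : ℂ) :
    g₁ 2 τ = 3 / 2 * E₂ τ - 1 / 4 * (E₂ (τ / 3) + E₂ ((τ + 1) / 3)) := by
  simp [g₁, Finset.sum_filter, Finset.sum_range_succ]

lemma E₂_add_three_div (τ : ℂ) : E₂ ((τ + 3) / 3) = E₂ (τ / 3) := by
  rw [← E₂_add_one (τ / 3)]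
  ring_nf

lemma g₁_zero_add_one (τ : ℂ) : g₁ 0 (τ + 1) = g₁ 1 τ := by
  rw [g₁_zero, g₁_one, E₂_add_one, ← E₂_add_three_div τ]
  ring_nf

lemma g₁_one_add_one (τ : ℂ) : g₁ 1 (τ + 1) = g₁ 2 τ := by
  rw [g₁_one, g₁_two, E₂_add_one, ← E₂_add_three_div τ]
  ring_nf

lemma g₁_two_add_one (τ : ℂ) : g₁ 2 (τ + 1) = g₁ 0 τ := by
  rw [g₁_two, g₁_zero, E₂_add_one]
  ring_nf

lemma ne_zero_of_im_pos {τ : ℂ} (hτ : 0 < τ.im) : τ ≠ 0 := by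
  rintro rfl
  simp at hτ

lemma E₂_neg_one_div {τ : ℂ} (hτ : 0 < τ.im) :
    E₂ (-1 / τ) = τ ^ 2 * E₂ τ + 6 * τ / (Real.pi * I) := by
  simpa using E₂_moebius (a := 0) (b := -1) (c := 1) (d := 0) (by norm_num) hτ

lemma E₂_neg_one_div_div_three {τ : ℂ} (hτ : 0 < τ.im) :
    E₂ (-1 / τ / 3) = 9 * τ ^ 2 * E₂ (3 * τ) + 18 * τ / (Real.pi * I) := by
  have h3 : 0 < (3 * τ).im := by simpa using hτ
  have h := E₂_neg_one_div h3
  rw [div_div, mul_comm τ 3, h]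
  ring

lemma E₂_neg_one_div_add_one_div_three {τ : ℂ} (hτ : 0 < τ.im) :
    E₂ ((-1 / τ + 1) / 3) = τ ^ 2 * E₂ ((τ + 2) / 3) + 18 * τ / (Real.pi * I) := by
  have h2 : 0 < ((τ + 2) / 3).im := by simpa using hτ
  have h := E₂_moebius (a := 1) (b := -1) (c := 3) (d := -2) (by norm_num) h2
  have hτ0 := ne_zero_of_im_pos hτ
  push_cast at h
  have hd : (3 : ℂ) * ((τ + 2) / 3) + -2 = τ := by ring
  rw [hd] at h
  convert h using 2
  · field_simp
    ring
  · ring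

lemma E₂_neg_one_div_add_two_div_three {τ : ℂ} (hτ : 0 < τ.im) :
    E₂ ((-1 / τ + 2) / 3) = τ ^ 2 * E₂ ((τ + 1) / 3) + 18 * τ / (Real.pi * I) := by
  have h2 : 0 < ((τ + 1) / 3).im := by simpa using hτ
  have h := E₂_moebius (a := 2) (b := -1) (c := 3) (d := -1) (by norm_num) h2
  have hτ0 := ne_zero_of_im_pos hτ
  push_cast at h
  have hd : (3 : ℂ) * ((τ + 1) / 3) + -1 = τ := by ring
  rw [hd] at h
  convert h using 2
  · field_simp
    ring
  · ring

lemma g₁_zero_neg_one_div {τ : ℂ} (hτ : 0 < τ.im) : g₁ 0 (-1 / τ) = τ ^ 2 * g₁ 0 τ := by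
  rw [g₁_zero, g₁_zero, E₂_neg_one_div hτ, E₂_neg_one_div_add_one_div_three hτ,
    E₂_neg_one_div_add_two_div_three hτ]
  ring

lemma g₁_one_neg_one_div {τ : ℂ} (hτ : 0 < τ.im) : g₁ 1 (-1 / τ) = -τ ^ 2 * g₁ 1 τ := by
  rw [g₁_one, g₁_one, E₂_neg_one_div hτ, E₂_neg_one_div_div_three hτ,
    E₂_neg_one_div_add_two_div_three hτ]
  linear_combination (-τ ^ 2 / 4) * E₂_hecke_three hτ

lemma g₁_two_neg_one_div {τ : ℂ} (hτ : 0 < τ.im) : g₁ 2 (-1 / τ) = -τ ^ 2 * g₁ 2 τ := by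
  rw [g₁_two, g₁_two, E₂_neg_one_div hτ, E₂_neg_one_div_div_three hτ,
    E₂_neg_one_div_add_one_div_three hτ]
  linear_combination (-τ ^ 2 / 4) * E₂_hecke_three hτ

lemma g₁_zero_I : g₁ 0 I = 0 := by
  have h := g₁_zero_neg_one_div (τ := I) (by simp)
  rw [show (-1 / I : ℂ) = I by field_simp; simp, I_sq] at h
  linear_combination h / 2

lemma differentiableAt_E₂ {τ : ℂ} (hτ : 0 < τ.im) : DifferentiableAt ℂ E₂ τ := by
  have h := UpperHalfPlane.mdifferentiable_iff.1 E2_mdifferentiable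
  have hU : {z : ℂ | 0 < z.im} ∈ nhds τ := UpperHalfPlane.isOpen_upperHalfPlaneSet.mem_nhds hτ
  refine (h.differentiableAt hU).congr_of_eventuallyEq ?_
  filter_upwards [hU] with z hz
  rw [Function.comp_apply, ← E₂_coe, UpperHalfPlane.ofComplex_apply_of_im_pos hz]

lemma differentiableAt_g₁ (j : ℕ) {τ : ℂ} (hτ : 0 < τ.im) : DifferentiableAt ℂ (g₁ j) τ := by
  refine ((differentiableAt_E₂ hτ).const_mul _).sub
    ((DifferentiableAt.fun_sum fun m _ => ?_).const_mul _)
  exact DifferentiableAt.comp (g := E₂) τ (differentiableAt_E₂ (by simpa using hτ)) (by fun_prop)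

open Filter Topology

lemma tendsto_tsum_sigmaC (k : ℕ) :
    Tendsto (fun τ => ∑' n : ℕ, sigmaC k (n + 1) * qq τ ^ (n + 1)) (comap im atTop) (𝓝 0) := by
  have hq : Tendsto (fun τ => ‖qq τ‖) (comap im atTop) (𝓝 0) := by
    simp_rw [norm_qq]
    refine Real.tendsto_exp_neg_atTop_nhds_zero.comp ?_
    exact tendsto_comap.const_mul_atTop Real.two_pi_pos
  have hq' : Tendsto qq (comap im atTop) (𝓝 0) := tendsto_zero_iff_norm_tendsto_zero.2 hq
  have hbound : Summable fun n : ℕ => ((n + 1 : ℕ) : ℝ) ^ (k + 1) * (1 / 2) ^ (n + 1) := by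
    refine (summable_nat_add_iff (f := fun n : ℕ => (n : ℝ) ^ (k + 1) * (1 / 2) ^ n) 1).2 ?_
    exact summable_pow_mul_geometric_of_norm_lt_one _ (by norm_num)
  rw [← tsum_zero (α := ℂ) (β := ℕ)]
  refine tendsto_tsum_of_dominated_convergence hbound (fun n => ?_) ?_
  · simpa using (hq'.pow (n + 1)).const_mul (sigmaC k (n + 1))
  · filter_upwards [hq.eventually_le_const (show (0 : ℝ) < 1 / 2 by norm_num)] with τ hτ n
    rw [norm_mul, norm_pow]
    gcongr
    exact norm_sigmaC_le k (n + 1)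

lemma tendsto_E₂ : Tendsto E₂ (comap im atTop) (𝓝 1) := by
  simpa [E₂] using! ((tendsto_tsum_sigmaC 1).const_mul 24).const_sub 1

lemma tendsto_E₆ : Tendsto E₆ (comap im atTop) (𝓝 1) := by
  simpa [E₆] using! ((tendsto_tsum_sigmaC 5).const_mul 504).const_sub 1

lemma tendsto_g₁ {j : ℕ} (hj : j < 3) : Tendsto (g₁ j) (comap im atTop) (𝓝 1) := by
  have hE (m : ℕ) : Tendsto (fun τ : ℂ => E₂ ((τ + m) / 3)) (comap im atTop) (𝓝 1) := by
    refine tendsto_E₂.comp (tendsto_comap_iff.2 ?_)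
    have : im ∘ (fun τ : ℂ => (τ + m) / 3) = fun τ => τ.im / 3 := by
      ext; simp
    rw [this]
    exact tendsto_comap.atTop_div_const (by norm_num)
  have h := (tendsto_E₂.const_mul (3 / 2)).sub
    ((tendsto_finsetSum ((Finset.range 3).filter fun m => ¬ m % 3 = j % 3)
      fun m _ => hE m).const_mul (1 / 4))
  have hc : ((Finset.range 3).filter fun m => ¬ m % 3 = j % 3).card = 2 := by
    interval_cases j <;> rfl
  rw [Finset.sum_const, hc] at h
  norm_num at h
  exact h.congr fun τ => by simp [g₁]

lemma tendsto_prod_g₁ :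
    Tendsto (fun z : ℍ => g₁ 0 z * g₁ 1 z * g₁ 2 z) UpperHalfPlane.atImInfty (𝓝 1) := by
  simpa using! (((tendsto_g₁ (j := 0) (by norm_num)).mul (tendsto_g₁ (j := 1) (by norm_num))).mul
    (tendsto_g₁ (j := 2) (by norm_num))).comp UpperHalfPlane.tendsto_coe_atImInfty

/-- The product `g_{1,0} g_{1,1} g_{1,2}` as a modular form of weight `6` and level one. -/
noncomputable def prodG₁ : ModularForm 𝒮ℒ 6 :=
  let F : ℍ → ℂ := fun z => g₁ 0 z * g₁ 1 z * g₁ 2 z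
  have hF : ∀ γ : SL(2, ℤ), F ∣[(6 : ℤ)] γ = F := by
    refine SlashInvariantForm.slash_action_generators_SL2Z ?_ ?_
    · ext z
      have hz : (z : ℂ) ≠ 0 := z.ne_zero
      have h : ((-z : ℂ)⁻¹) = -1 / z := by field_simp
      rw [SlashInvariantForm.slash_S_apply]
      simp only [F, h, g₁_zero_neg_one_div z.im_pos, g₁_one_neg_one_div z.im_pos,
        g₁_two_neg_one_div z.im_pos]
      rw [zpow_neg]
      field_simp
    · ext z
      rw [ModularForm.SL_slash_apply, UpperHalfPlane.modular_T_smul, ModularGroup.denom_apply]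
      simp only [F, UpperHalfPlane.coe_vadd, ofReal_one, add_comm (1 : ℂ), g₁_zero_add_one,
        g₁_one_add_one, g₁_two_add_one]
      simp [ModularGroup.T]
      ring
  { toFun := F
    slash_action_eq' := fun _ ⟨γ, hγ⟩ => hγ ▸ hF γ
    holo' := by
      rw [UpperHalfPlane.mdifferentiable_iff]
      intro z hz
      have hd := ((differentiableAt_g₁ 0 hz).mul (differentiableAt_g₁ 1 hz)).mul
        (differentiableAt_g₁ 2 hz)
      refine hd.differentiableWithinAt.congr (fun w hw => ?_) ?_
      · simp [F, UpperHalfPlane.ofComplex_apply_of_im_pos hw]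
      · simp [F, UpperHalfPlane.ofComplex_apply_of_im_pos hz]
    bdd_at_cusps' := fun {c} hc => by
      rw [Subgroup.IsArithmetic.isCusp_iff_isCusp_SL2Z] at hc
      rw [OnePoint.isBoundedAt_iff_forall_SL2Z hc]
      intro γ _
      rw [hF γ]
      exact tendsto_prod_g₁.isBigO_one ℝ }

lemma prodG₁_apply (z : ℍ) : prodG₁ z = g₁ 0 z * g₁ 1 z * g₁ 2 z := rfl

lemma prodG₁_eq_E₆ : prodG₁ = ModularForm.E₆ := by
  obtain ⟨c, hc⟩ : ∃ c : ℂ, c • ModularForm.E₆ = prodG₁ :=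
    (finrank_eq_one_iff_of_nonzero' ModularForm.E₆ (EisensteinSeries.E_ne_zero _ ⟨3, rfl⟩)).mp
      (Module.rank_eq_one_iff_finrank_eq_one.mp ModularForm.levelOne_weight_six_rank_one) _
  have hE := (tendsto_E₆.const_mul c).comp UpperHalfPlane.tendsto_coe_atImInfty
  have hpt (z : ℍ) : c * E₆ z = g₁ 0 z * g₁ 1 z * g₁ 2 z := by
    rw [← prodG₁_apply, ← hc, E₆_coe]
    rfl
  have hc1 := tendsto_nhds_unique (hE.congr hpt) tendsto_prod_g₁
  rw [← hc, show c = 1 by simpa using hc1, one_smul]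

theorem stmt5 :
    (∀ τ : ℂ, 0 < τ.im → g₁ 0 τ * g₁ 1 τ * g₁ 2 τ = E₆ τ) ∧
    (∀ j : ℕ, j < 3 → g₁ j (-(j : ℂ) + Complex.I) = 0) ∧
    (∀ τ : ℂ, 0 < τ.im → g₁ 0 (-1 / τ) = τ ^ 2 * g₁ 0 τ) ∧
    (∀ j : ℕ, (j = 1 ∨ j = 2) → ∀ τ : ℂ, 0 < τ.im → g₁ j (-1 / τ) = -τ ^ 2 * g₁ j τ) := by
  refine ⟨fun τ hτ => ?_, fun j hj => ?_, fun τ hτ => g₁_zero_neg_one_div hτ, ?_⟩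
  · have h := E₆_coe ⟨τ, hτ⟩
    rw [← prodG₁_eq_E₆, prodG₁_apply] at h
    exact h.symm
  · interval_cases j
    · simpa using g₁_zero_I
    · rw [← g₁_zero_add_one]
      simpa using g₁_zero_I
    · rw [← g₁_one_add_one, ← g₁_zero_add_one, ← g₁_zero_I]
      push_cast
      ring_nf
  · rintro j (rfl | rfl) τ hτ
    exacts [g₁_one_neg_one_div hτ, g₁_two_neg_one_div hτ]
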